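/- arXiv:0708.1969 — 5 statements merged into one kernel-verified Lean document; each statement's English description precedes it below -/
import Mathlib

section
/- Let n be a natural number, a : Fin n → ℤ, and for nonzero λ ∈ ℂ let D_a(λ) denote the diagonal matrix with diagonal entries λ^{a i} (integer powers). For any g ∈ GL_n(ℂ), the function λ ↦ D_a(λ) · g · D_a(λ)⁻¹ (as an n×n complex matrix) tends to the identity matrix along the punctured neighborhood filter 𝓝[≠] 0 on ℂ if and only if for all indices i, j with a i ≤ a j, the (i,j) entry of g equals the (i,j) entry of the identity matrix (i.e. g_{ij} = 1 if i = j and g_{ij} = 0 if i ≠ j). -/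
open Filter Matrix

/-!
For `lam ≠ 0` the `(i, j)` entry of the conjugate is `lam ^ (a i - a j) * g i j`
(`conj_diagonal_apply`), and convergence of matrices is entrywise. If `a j < a i`, the entry tends
to `0`, so it imposes no condition. If `a i ≤ a j`, multiplying the entry by the
function `lam ^ (a j - a i)`, which has a limit at `0`, recovers the constant `g i j`; uniqueness
of limits then forces `g i j = 0 ^ (a j - a i) * 1 i j`, which is the identity entry.
-/

lemma conj_diagonal_apply {n : ℕ} (a : Fin n → ℤ) (g : Matrix (Fin n) (Fin n) ℂ)
    {lam : ℂ} (h : lam ≠ 0) (i j : Fin n) :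
    (Matrix.diagonal (fun i => lam ^ (a i)) * g *
      (Matrix.diagonal (fun i => lam ^ (a i)))⁻¹) i j = lam ^ (a i - a j) * g i j := by
  have hinv : (Matrix.diagonal (fun i => lam ^ (a i)))⁻¹
      = Matrix.diagonal (fun i => (lam ^ (a i))⁻¹) := by
    apply Matrix.inv_eq_right_inv
    rw [Matrix.diagonal_mul_diagonal, ← Matrix.diagonal_one]
    congr 1
    funext k
    exact mul_inv_cancel₀ (zpow_ne_zero _ h)
  rw [hinv, Matrix.mul_diagonal, Matrix.diagonal_mul, zpow_sub₀ h]
  ring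

lemma tendsto_zpow_punctured_zero {m : ℤ} (hm : 0 ≤ m) :
    Tendsto (fun lam : ℂ => lam ^ m) (nhdsWithin 0 {0}ᶜ) (nhds (0 ^ m)) :=
  (continuousAt_zpow₀ (0 : ℂ) m (Or.inr hm)).tendsto.mono_left nhdsWithin_le_nhds

/-- For the one-parameter subgroup `λ ↦ diag(λ^(a i))` of `GL_n(ℂ)`, the conjugate
`D_a(λ) g D_a(λ)⁻¹` tends to the identity matrix as `λ → 0` (along the punctured
neighborhood filter) if and only if `g` agrees with the identity matrix in every
entry `(i,j)` with `a i ≤ a j`. -/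
theorem tendsto_conj_diagonal_nhdsWithin_zero_iff (n : ℕ) (a : Fin n → ℤ)
    (g : GL (Fin n) ℂ) :
    Filter.Tendsto
      (fun lam : ℂ =>
        Matrix.diagonal (fun i => lam ^ (a i)) * (g : Matrix (Fin n) (Fin n) ℂ) *
          (Matrix.diagonal (fun i => lam ^ (a i)))⁻¹)
      (nhdsWithin (0 : ℂ) {0}ᶜ) (nhds (1 : Matrix (Fin n) (Fin n) ℂ)) ↔
    ∀ i j : Fin n, a i ≤ a j →
      (g : Matrix (Fin n) (Fin n) ℂ) i j = (1 : Matrix (Fin n) (Fin n) ℂ) i j := by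
  have key : ∀ i j : Fin n, Tendsto (fun lam : ℂ =>
        (Matrix.diagonal (fun i => lam ^ (a i)) * (g : Matrix (Fin n) (Fin n) ℂ) *
          (Matrix.diagonal (fun i => lam ^ (a i)))⁻¹) i j)
        (nhdsWithin (0 : ℂ) {0}ᶜ) (nhds ((1 : Matrix (Fin n) (Fin n) ℂ) i j)) ↔
      Tendsto (fun lam : ℂ => lam ^ (a i - a j) * (g : Matrix (Fin n) (Fin n) ℂ) i j)
        (nhdsWithin (0 : ℂ) {0}ᶜ) (nhds ((1 : Matrix (Fin n) (Fin n) ℂ) i j)) := by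
    intro i j
    apply tendsto_congr'
    filter_upwards [self_mem_nhdsWithin] with lam hlam
    exact conj_diagonal_apply a _ hlam i j
  refine (tendsto_pi_nhds.trans (forall_congr' fun i =>
    tendsto_pi_nhds.trans (forall_congr' fun j => key i j))).trans ?_
  refine forall_congr' fun i => forall_congr' fun j => ⟨fun h hij => ?_, fun h => ?_⟩
  · have h1 := (tendsto_zpow_punctured_zero (sub_nonneg.2 hij)).mul h
    have h2 : Tendsto (fun _ : ℂ => (g : Matrix (Fin n) (Fin n) ℂ) i j)
        (nhdsWithin (0 : ℂ) {0}ᶜ)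
        (nhds (0 ^ (a j - a i) * (1 : Matrix (Fin n) (Fin n) ℂ) i j)) := by
      refine h1.congr' ?_
      filter_upwards [self_mem_nhdsWithin] with lam hlam
      rw [← mul_assoc, ← zpow_add₀ hlam]
      simp
    rw [tendsto_nhds_unique tendsto_const_nhds h2]
    by_cases e : i = j
    · simp [e]
    · simp [Matrix.one_apply_ne e]
  · rcases le_or_gt (a i) (a j) with hij | hij
    · rw [h hij]
      by_cases e : i = j
      · simp [e]
      · simp [Matrix.one_apply_ne e]
    · have e : i ≠ j := by rintro rfl; exact lt_irrefl _ hij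
      have h1 := (tendsto_zpow_punctured_zero (sub_nonneg.2 hij.le)).mul_const
        ((g : Matrix (Fin n) (Fin n) ℂ) i j)
      rw [_root_.zero_zpow _ (sub_pos.2 hij).ne', zero_mul] at h1
      rwa [Matrix.one_apply_ne e]
end

section
/- Let n be a natural number, a : Fin n → ℤ, and for nonzero λ ∈ ℂ let D_a(λ) denote the diagonal matrix with diagonal entries λ^{a i} (integer powers). For any g ∈ GL_n(ℂ), the function λ ↦ D_a(λ) · g · D_a(λ)⁻¹ (as an n×n complex matrix) tends to the identity matrix along the cobounded filter on ℂ (i.e. as λ → ∞) if and only if for all indices i, j with a j ≤ a i, the (i,j) entry of g equals the (i,j) entry of the identity matrix. -/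
/-!
For `λ ≠ 0`, which holds eventually as `λ → ∞`, the `(i, j)` entry of the conjugate is
`λ ^ (a i - a j) * g i j`, and convergence of matrices is entrywise. If `a i < a j` the entry
tends to `0` whatever `g i j` is. If `a i = a j` the entry is constantly `g i j`. If `a j < a i`
then multiplying a convergent entry by `λ ^ (a j - a i) → 0` recovers the constant `g i j`, which
must therefore vanish.
-/

open Filter Matrix

lemma tendsto_zpow_cobounded_zero {k : ℤ} (hk : k < 0) :
    Tendsto (fun z : ℂ => z ^ k) (Bornology.cobounded ℂ) (nhds 0) := by
  obtain ⟨m, rfl⟩ : ∃ m : ℕ, k = -(m : ℤ) := ⟨k.natAbs, by omega⟩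
  have hm : m ≠ 0 := by omega
  have h := (tendsto_inv₀_cobounded (α := ℂ)).pow m
  simpa [hm] using h

lemma conj_diagonal_zpow_apply {n : ℕ} (a : Fin n → ℤ) (M : Matrix (Fin n) (Fin n) ℂ)
    {z : ℂ} (hz : z ≠ 0) (i j : Fin n) :
    (diagonal (fun i => z ^ a i) * M * (diagonal (fun i => z ^ a i))⁻¹) i j =
      z ^ (a i - a j) * M i j := by
  have hinv : (diagonal (fun i => z ^ a i))⁻¹ = diagonal (fun i => z ^ (-a i)) := by
    apply Matrix.inv_eq_right_inv
    rw [diagonal_mul_diagonal, ← diagonal_one]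
    congr 1
    ext i
    rw [← zpow_add₀ hz, add_neg_cancel, zpow_zero]
  rw [hinv, mul_diagonal, diagonal_mul, sub_eq_add_neg, zpow_add₀ hz]
  ring

/-- For the one-parameter subgroup `λ ↦ diag(λ^(a i))` of `GL_n(ℂ)`, the conjugate
`D_a(λ) g D_a(λ)⁻¹` tends to the identity matrix as `λ → ∞` (along the cobounded
filter on `ℂ`) if and only if `g` agrees with the identity matrix in every
entry `(i,j)` with `a j ≤ a i`. -/
theorem tendsto_conj_diagonal_cobounded_iff (n : ℕ) (a : Fin n → ℤ)
    (g : GL (Fin n) ℂ) :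
    Filter.Tendsto
      (fun lam : ℂ =>
        Matrix.diagonal (fun i => lam ^ (a i)) * (g : Matrix (Fin n) (Fin n) ℂ) *
          (Matrix.diagonal (fun i => lam ^ (a i)))⁻¹)
      (Bornology.cobounded ℂ) (nhds (1 : Matrix (Fin n) (Fin n) ℂ)) ↔
    ∀ i j : Fin n, a j ≤ a i →
      (g : Matrix (Fin n) (Fin n) ℂ) i j = (1 : Matrix (Fin n) (Fin n) ℂ) i j := by
  have hne : ∀ᶠ z : ℂ in Bornology.cobounded ℂ, z ≠ 0 := Bornology.eventually_ne_cobounded 0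
  refine tendsto_pi_nhds.trans ?_
  refine (forall_congr' fun i => tendsto_pi_nhds).trans ?_
  refine forall_congr' fun i => forall_congr' fun j => ?_
  rw [tendsto_congr' (hne.mono fun z hz => conj_diagonal_zpow_apply a _ hz i j)]
  rcases lt_trichotomy (a i) (a j) with h | h | h
  · have hij : i ≠ j := by rintro rfl; exact lt_irrefl _ h
    have ht := (tendsto_zpow_cobounded_zero (sub_neg.mpr h)).mul_const
      ((g : Matrix (Fin n) (Fin n) ℂ) i j)
    rw [zero_mul] at ht
    simp only [one_apply_ne hij]
    exact ⟨fun _ h' => absurd h' (not_le.mpr h), fun _ => ht⟩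
  · simp [h, tendsto_const_nhds_iff]
  · have hij : i ≠ j := by rintro rfl; exact lt_irrefl _ h
    simp only [one_apply_ne hij]
    refine ⟨fun ht _ => ?_, fun h' => ?_⟩
    · have hp := (tendsto_zpow_cobounded_zero (sub_neg.mpr h)).mul ht
      rw [zero_mul] at hp
      refine tendsto_nhds_unique (tendsto_const_nhds.congr' ?_) hp
      filter_upwards [hne] with z hz
      rw [← mul_assoc, ← zpow_add₀ hz]
      simp
    · simp [h' h.le]
end

section
/- Let R be a commutative ring, n a natural number, a : Fin n → ℤ, and M an n×n matrix over R such that for all indices i, j with a i ≤ a j, the (i,j) entry of M equals the (i,j) entry of the identity matrix. Then M − 1 is nilpotent; in fact (M − 1)^n = 0. -/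
/-!
Let `r i` be the number of indices `l` with `a l < a i`. A nonzero entry `(i, l)` of `N = M - 1`
forces `a l < a i`, hence `r l < r i`, so by induction on `k` row `i` of `N ^ k` vanishes
whenever `r i < k`. Since `i` itself is never counted, `r i < n` for every `i`, and `N ^ n = 0`.
-/

/-- If a matrix `M` over a commutative ring agrees with the identity matrix in every
entry `(i,j)` with `a i ≤ a j`, then `M - 1` is nilpotent; in fact `(M - 1)^n = 0`. -/
theorem sub_one_nilpotent_of_weighted_unitriangular {R : Type*} [CommRing R] (n : ℕ)
    (a : Fin n → ℤ) (M : Matrix (Fin n) (Fin n) R)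
    (hM : ∀ i j : Fin n, a i ≤ a j → M i j = (1 : Matrix (Fin n) (Fin n) R) i j) :
    IsNilpotent (M - 1) ∧ (M - 1) ^ n = 0 := by
  let r : Fin n → ℕ := fun i => (Finset.univ.filter fun l => a l < a i).card
  have hr_lt : ∀ i, r i < n := fun i => by
    have h : r i < (Finset.univ : Finset (Fin n)).card :=
      Finset.card_lt_card (Finset.filter_ssubset.2 ⟨i, Finset.mem_univ i, lt_irrefl _⟩)
    simpa using h
  have hr_mono : ∀ i l, a l < a i → r l < r i := fun i l hil => by
    refine Finset.card_lt_card (Finset.ssubset_iff_of_subset ?_ |>.2 ⟨l, ?_, ?_⟩)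
    · intro m hm
      simp only [Finset.mem_filter, Finset.mem_univ, true_and] at hm ⊢
      exact hm.trans hil
    · simpa using hil
    · simp
  have hpow : ∀ k i j, r i < k → ((M - 1) ^ k) i j = 0 := by
    intro k
    induction k with
    | zero => intro i j h; exact absurd h (Nat.not_lt_zero _)
    | succ k ih =>
      intro i j h
      rw [pow_succ', Matrix.mul_apply]
      refine Finset.sum_eq_zero fun l _ => ?_
      rcases le_or_gt (a i) (a l) with hil | hil
      · rw [Matrix.sub_apply, hM i l hil, sub_self, zero_mul]
      · rw [ih l j (lt_of_lt_of_le (hr_mono i l hil) (Nat.le_of_lt_succ h)), mul_zero]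
  have hzero : (M - 1) ^ n = 0 := by
    ext i j
    exact hpow n i j (hr_lt i)
  exact ⟨⟨n, hzero⟩, hzero⟩
end

section
/- Let G be a subgroup of GL_n(ℂ), a : Fin n → ℤ, and for nonzero λ ∈ ℂ let D_a(λ) denote the diagonal matrix with diagonal entries λ^{a i}; assume D_a(λ) ∈ G for all nonzero λ. Define G⁺ = {g ∈ G | the matrix-valued function λ ↦ D_a(λ) · g · D_a(λ)⁻¹ tends to the identity along the punctured neighborhood filter 𝓝[≠] 0 on ℂ}. Then G⁺ is a subgroup of G, and every g ∈ G⁺ is unipotent, i.e. (g − 1)^n = 0 as an n×n matrix. -/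
open Filter Matrix

/-!
Conjugation by the invertible matrix `D_a(λ)`, `λ ≠ 0`, is multiplicative, and multiplication and
inversion are continuous at invertible matrices, so the matrices contracted to `1` form a group.
For unipotence, the characteristic polynomial is constant along each conjugacy class and its values
`det (x - M)` are continuous in `M`; passing to the limit `λ → 0` shows that every `g ∈ G⁺` has the
characteristic polynomial `(X - 1)^n` of the identity, and Cayley–Hamilton gives `(g - 1)^n = 0`.
-/

lemma isUnit_diagonal_zpow {n : ℕ} (a : Fin n → ℤ) {lam : ℂ} (h : lam ≠ 0) :
    IsUnit (Matrix.diagonal (fun i => lam ^ (a i))) := by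
  rw [Matrix.isUnit_diagonal, Pi.isUnit_iff]
  exact fun i => (zpow_ne_zero _ h).isUnit

/-- Taking limits of conjugates preserves the characteristic polynomial, since each of its values
is a continuous conjugation-invariant function of the matrix. -/
lemma charpoly_eq_of_tendsto_conj {n : ℕ} {ι : Type*} {l : Filter ι} [l.NeBot]
    {D : ι → Matrix (Fin n) (Fin n) ℂ} {M N : Matrix (Fin n) (Fin n) ℂ}
    (hD : ∀ᶠ t in l, IsUnit (D t))
    (hlim : Tendsto (fun t => D t * M * (D t)⁻¹) l (nhds N)) :
    M.charpoly = N.charpoly := by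
  refine Polynomial.funext fun x => ?_
  have hcont : Continuous fun A : Matrix (Fin n) (Fin n) ℂ => A.charpoly.eval x := by
    simp only [Matrix.eval_charpoly]
    fun_prop
  refine tendsto_nhds_unique (l := l) (f := fun _ : ι => M.charpoly.eval x) tendsto_const_nhds ?_
  refine ((hcont.tendsto N).comp hlim).congr' ?_
  filter_upwards [hD] with t ht
  obtain ⟨u, hu⟩ := ht
  simp only [Function.comp_apply, ← hu, Matrix.charpoly_units_conj]

/-- Let `G` be a subgroup of `GL_n(ℂ)` containing the diagonal one-parameter subgroup
`λ ↦ diag(λ^(a i))` (for `λ ≠ 0`). The positive part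
`G⁺ = {g ∈ G | D_a(λ) g D_a(λ)⁻¹ → 1 as λ → 0}` is a subgroup of `G` (it contains `1`
and is closed under multiplication and inversion), and every `g ∈ G⁺` is unipotent:
`(g - 1)^n = 0` as a matrix. -/
theorem positive_part_subgroup_and_unipotent (n : ℕ) (a : Fin n → ℤ)
    (G : Subgroup (GL (Fin n) ℂ))
    (hdiag : ∀ lam : ℂ, lam ≠ 0 → ∃ u : GL (Fin n) ℂ, u ∈ G ∧
      (u : Matrix (Fin n) (Fin n) ℂ) = Matrix.diagonal (fun i => lam ^ (a i))) :
    (1 : GL (Fin n) ℂ) ∈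
      {g : GL (Fin n) ℂ | g ∈ G ∧ Filter.Tendsto
        (fun lam : ℂ =>
          Matrix.diagonal (fun i => lam ^ (a i)) * (g : Matrix (Fin n) (Fin n) ℂ) *
            (Matrix.diagonal (fun i => lam ^ (a i)))⁻¹)
        (nhdsWithin (0 : ℂ) {0}ᶜ) (nhds (1 : Matrix (Fin n) (Fin n) ℂ))} ∧
    (∀ g h : GL (Fin n) ℂ,
      g ∈ {g : GL (Fin n) ℂ | g ∈ G ∧ Filter.Tendsto
        (fun lam : ℂ =>
          Matrix.diagonal (fun i => lam ^ (a i)) * (g : Matrix (Fin n) (Fin n) ℂ) *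
            (Matrix.diagonal (fun i => lam ^ (a i)))⁻¹)
        (nhdsWithin (0 : ℂ) {0}ᶜ) (nhds (1 : Matrix (Fin n) (Fin n) ℂ))} →
      h ∈ {g : GL (Fin n) ℂ | g ∈ G ∧ Filter.Tendsto
        (fun lam : ℂ =>
          Matrix.diagonal (fun i => lam ^ (a i)) * (g : Matrix (Fin n) (Fin n) ℂ) *
            (Matrix.diagonal (fun i => lam ^ (a i)))⁻¹)
        (nhdsWithin (0 : ℂ) {0}ᶜ) (nhds (1 : Matrix (Fin n) (Fin n) ℂ))} →
      g * h ∈ {g : GL (Fin n) ℂ | g ∈ G ∧ Filter.Tendsto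
        (fun lam : ℂ =>
          Matrix.diagonal (fun i => lam ^ (a i)) * (g : Matrix (Fin n) (Fin n) ℂ) *
            (Matrix.diagonal (fun i => lam ^ (a i)))⁻¹)
        (nhdsWithin (0 : ℂ) {0}ᶜ) (nhds (1 : Matrix (Fin n) (Fin n) ℂ))}) ∧
    (∀ g : GL (Fin n) ℂ,
      g ∈ {g : GL (Fin n) ℂ | g ∈ G ∧ Filter.Tendsto
        (fun lam : ℂ =>
          Matrix.diagonal (fun i => lam ^ (a i)) * (g : Matrix (Fin n) (Fin n) ℂ) *
            (Matrix.diagonal (fun i => lam ^ (a i)))⁻¹)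
        (nhdsWithin (0 : ℂ) {0}ᶜ) (nhds (1 : Matrix (Fin n) (Fin n) ℂ))} →
      g⁻¹ ∈ {g : GL (Fin n) ℂ | g ∈ G ∧ Filter.Tendsto
        (fun lam : ℂ =>
          Matrix.diagonal (fun i => lam ^ (a i)) * (g : Matrix (Fin n) (Fin n) ℂ) *
            (Matrix.diagonal (fun i => lam ^ (a i)))⁻¹)
        (nhdsWithin (0 : ℂ) {0}ᶜ) (nhds (1 : Matrix (Fin n) (Fin n) ℂ))}) ∧
    (∀ g : GL (Fin n) ℂ,
      g ∈ {g : GL (Fin n) ℂ | g ∈ G ∧ Filter.Tendsto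
        (fun lam : ℂ =>
          Matrix.diagonal (fun i => lam ^ (a i)) * (g : Matrix (Fin n) (Fin n) ℂ) *
            (Matrix.diagonal (fun i => lam ^ (a i)))⁻¹)
        (nhdsWithin (0 : ℂ) {0}ᶜ) (nhds (1 : Matrix (Fin n) (Fin n) ℂ))} →
      ((g : Matrix (Fin n) (Fin n) ℂ) - 1) ^ n = 0) := by
  have hunit : ∀ᶠ lam : ℂ in nhdsWithin (0 : ℂ) {0}ᶜ,
      IsUnit (Matrix.diagonal (fun i => lam ^ (a i))) := by
    filter_upwards [self_mem_nhdsWithin] with lam hlam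
    exact isUnit_diagonal_zpow a hlam
  refine ⟨⟨G.one_mem, ?_⟩, ?_, ?_, ?_⟩
  · refine tendsto_const_nhds.congr' ?_
    filter_upwards [hunit] with lam hu
    rw [Units.val_one, mul_one, Matrix.mul_nonsing_inv _ ((Matrix.isUnit_iff_isUnit_det _).1 hu)]
  · rintro g h ⟨hgG, hg⟩ ⟨hhG, hh⟩
    refine ⟨G.mul_mem hgG hhG, ?_⟩
    have hgh := hg.mul hh
    rw [mul_one] at hgh
    refine hgh.congr' ?_
    filter_upwards [hunit] with lam hu
    have hdet := (Matrix.isUnit_iff_isUnit_det _).1 hu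
    simp only [Units.val_mul, mul_assoc, Matrix.nonsing_inv_mul_cancel_left _ _ hdet]
  · rintro g ⟨hgG, hg⟩
    refine ⟨G.inv_mem hgG, ?_⟩
    have hinv : Tendsto (fun A : Matrix (Fin n) (Fin n) ℂ => A⁻¹) (nhds 1) (nhds 1) := by
      have hc : ContinuousAt (fun A : Matrix (Fin n) (Fin n) ℂ => A⁻¹) 1 := by
        simp only [Matrix.inv_def, Ring.inverse_eq_inv']
        exact ((continuous_id.matrix_det.continuousAt).inv₀ (by simp)).smul
          continuous_id.matrix_adjugate.continuousAt
      simpa [ContinuousAt] using hc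
    refine (hinv.comp hg).congr' ?_
    filter_upwards [hunit] with lam hu
    have hdet := (Matrix.isUnit_iff_isUnit_det _).1 hu
    simp only [Function.comp_apply, Matrix.mul_inv_rev, Matrix.nonsing_inv_nonsing_inv _ hdet,
      Matrix.coe_units_inv, mul_assoc]
  · rintro g ⟨-, hg⟩
    have hchar := charpoly_eq_of_tendsto_conj hunit hg
    have hCH := Matrix.aeval_self_charpoly (g : Matrix (Fin n) (Fin n) ℂ)
    rw [hchar, Matrix.charpoly_one] at hCH
    simpa using hCH
end

section
/- Let K be a field, n a natural number, and a : Fin n → ℤ. Let U_a be the set of n×n matrices M over K such that for all indices i, j with a i ≤ a j, the (i,j) entry of M equals the (i,j) entry of the identity matrix. Then U_a contains the identity matrix, is closed under matrix multiplication, and every M ∈ U_a is invertible with M⁻¹ ∈ U_a; consequently U_a is (the underlying set of) a subgroup of GL_n(K). -/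
/-!
A matrix in `U_a` is block triangular for the partition of the indices by the weight `a`
(in decreasing order), with identity diagonal blocks. Hence its determinant is `1`, and its
inverse is again block triangular. The entries of the inverse in the diagonal blocks are then
read off from `M⁻¹ * M = 1`: in `(M⁻¹ * M) i j` with `a i ≤ a j` only the indices `k` with
`a k ≤ a i ≤ a j` contribute, and for these `M k j` is already the identity entry.
-/

/-- Over a field `K`, the set `U_a` of matrices agreeing with the identity in every
entry `(i,j)` with `a i ≤ a j` contains the identity, is closed under multiplication,
and each of its elements is invertible with inverse again in `U_a`; hence `U_a` is
(the underlying set of) a subgroup of `GL_n(K)`. -/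
theorem weighted_unitriangular_is_subgroup {K : Type*} [Field K] (n : ℕ)
    (a : Fin n → ℤ) :
    (1 : Matrix (Fin n) (Fin n) K) ∈
      {M : Matrix (Fin n) (Fin n) K |
        ∀ i j : Fin n, a i ≤ a j → M i j = (1 : Matrix (Fin n) (Fin n) K) i j} ∧
    (∀ M N : Matrix (Fin n) (Fin n) K,
      M ∈ {M : Matrix (Fin n) (Fin n) K |
        ∀ i j : Fin n, a i ≤ a j → M i j = (1 : Matrix (Fin n) (Fin n) K) i j} →
      N ∈ {M : Matrix (Fin n) (Fin n) K |
        ∀ i j : Fin n, a i ≤ a j → M i j = (1 : Matrix (Fin n) (Fin n) K) i j} →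
      M * N ∈ {M : Matrix (Fin n) (Fin n) K |
        ∀ i j : Fin n, a i ≤ a j → M i j = (1 : Matrix (Fin n) (Fin n) K) i j}) ∧
    (∀ M : Matrix (Fin n) (Fin n) K,
      M ∈ {M : Matrix (Fin n) (Fin n) K |
        ∀ i j : Fin n, a i ≤ a j → M i j = (1 : Matrix (Fin n) (Fin n) K) i j} →
      IsUnit M ∧ M⁻¹ ∈ {M : Matrix (Fin n) (Fin n) K |
        ∀ i j : Fin n, a i ≤ a j → M i j = (1 : Matrix (Fin n) (Fin n) K) i j}) := by
  refine ⟨fun _ _ _ => rfl, fun M N hM hN i j hij => ?_, fun M hM => ?_⟩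
  · simp only [Set.mem_ofPred_eq] at hM hN
    rw [← hN i j hij, Matrix.mul_apply, Finset.sum_eq_single i]
    · rw [hM i i le_rfl, Matrix.one_apply_eq, one_mul]
    · intro k _ hki
      rcases le_or_gt (a i) (a k) with h | h
      · rw [hM i k h, Matrix.one_apply_ne hki.symm, zero_mul]
      · have hkj : k ≠ j := by
          rintro rfl
          exact absurd hij (not_le.mpr h)
        rw [hN k j (h.le.trans hij), Matrix.one_apply_ne hkj, mul_zero]
    · simp
  · simp only [Set.mem_ofPred_eq] at hM ⊢
    -- Mathlib's block triangular matrices vanish where the weight of the row exceeds that of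
    -- the column; the condition here is the opposite one, whence the order dual.
    have hT : M.BlockTriangular (fun i => OrderDual.toDual (a i)) := by
      intro i j hij
      have hlt : a i < a j := hij
      have hne : i ≠ j := by
        rintro rfl
        exact lt_irrefl _ hlt
      rw [hM i j hlt.le, Matrix.one_apply_ne hne]
    have hdet : M.det = 1 := by
      rw [hT.det]
      refine Finset.prod_eq_one fun k _ => ?_
      have hblock : M.toSquareBlock (fun i => OrderDual.toDual (a i)) k = 1 := by
        ext ⟨i, hi⟩ ⟨j, hj⟩
        have hij : a i = a j := OrderDual.toDual.injective (hi.trans hj.symm)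
        simp [Matrix.toSquareBlock_def, hM i j hij.le, Matrix.one_apply]
      rw [hblock, Matrix.det_one]
    have hdetUnit : IsUnit M.det := by simp [hdet]
    refine ⟨(Matrix.isUnit_iff_isUnit_det M).mpr hdetUnit, fun i j hij => ?_⟩
    have := M.invertibleOfIsUnitDet hdetUnit
    have hTinv := Matrix.blockTriangular_inv_of_blockTriangular hT
    rw [← Matrix.nonsing_inv_mul M hdetUnit, Matrix.mul_apply, Finset.sum_eq_single j]
    · rw [hM j j le_rfl, Matrix.one_apply_eq, mul_one]
    · intro k _ hkj
      rcases le_or_gt (a k) (a j) with h | h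
      · rw [hM k j h, Matrix.one_apply_ne hkj, mul_zero]
      · rw [hTinv (show OrderDual.toDual (a k) < OrderDual.toDual (a i) from hij.trans_lt h),
          zero_mul]
    · simp
end
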